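/- arXiv:2203.00342 — 2 statements merged into one kernel-verified Lean document; each statement's English description precedes it below -/
import Mathlib

section
/- Initialization of the resisting oracle: let d ≥ 1, μ > 0, L > μ, and α₀ ∈ [μ/L², max(μ/L², 1/(2μ))]. Let x₀ ∈ ℝ^d and g₀ ∈ ℝ^d with g₀ ≠ 0, and set c₀ = x₀ − α₀·g₀. Then for any x* ∈ ℝ^d satisfying ⟨x* − c₀, g₀⟩ = 0 and ‖x* − c₀‖ = √(α₀/μ − α₀²)·‖g₀‖, one has ‖x₀ − x*‖² = (α₀/μ)·‖g₀‖², and there exists a differentiable function f : ℝ^d → ℝ in RSI⁻(μ) ∩ EB⁺(L) whose set of global minimizers is exactly {x*} and which satisfies ∇f(x₀) = g₀ and f(x₀) = ((μ+L)/(4μ))·α₀·‖g₀‖². -/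
noncomputable section

open RealInnerProductSpace

/-- The set of global minimizers of `f`. -/
def argminSet {d : ℕ} (f : EuclideanSpace ℝ (Fin d) → ℝ) :
    Set (EuclideanSpace ℝ (Fin d)) := {z | ∀ y, f z ≤ f y}

/-- `p` is the orthogonal projection map onto the set `X` : for each `x`, `p x` is a
nearest point to `x` in `X`. -/
def IsProjOn {d : ℕ} (p : EuclideanSpace ℝ (Fin d) → EuclideanSpace ℝ (Fin d))
    (X : Set (EuclideanSpace ℝ (Fin d))) : Prop :=
  ∀ x, p x ∈ X ∧ ∀ y ∈ X, ‖x - p x‖ ≤ ‖x - y‖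

/-- `f` is a differentiable function, whose set of global minimizers is nonempty, closed
and convex, belonging to `RSI⁻(μ) ∩ EB⁺(L)`. -/
def MemRSIEB {d : ℕ} (μ L : ℝ) (f : EuclideanSpace ℝ (Fin d) → ℝ) : Prop :=
  Differentiable ℝ f ∧ (argminSet f).Nonempty ∧ IsClosed (argminSet f) ∧
    Convex ℝ (argminSet f) ∧
    ∃ p, IsProjOn p (argminSet f) ∧
      (∀ x, μ * ‖x - p x‖ ^ 2 ≤ ⟪gradient f x, x - p x⟫) ∧
      (∀ x, ‖gradient f x‖ ≤ L * ‖x - p x‖)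

/-!
After a translation and a dilation, `x* = 0`, the point `v = x₀ - x*` is a unit vector, and the
prescribed gradient is `μ • v + w` with `w ⟂ v` and `‖w‖² ≤ L² - μ²`. Look for
`f = μ / 2 * ‖x‖² + ψ`: both conditions on `f` follow from `0 ≤ ⟪∇ψ x, x⟫` and
`‖∇ψ x‖² + 2 * μ * ⟪∇ψ x, x⟫ ≤ (L² - μ²) * ‖x‖²`.

Take `ψ x = ε * Ψ (⟪w, x⟫ / (ε * ‖x‖), 1 - ‖x‖ ^ 4)`. The angular part of `∇ψ` equals `w` at `v`
and uses a fraction at most `1 - (1 - ‖x‖ ^ 4)⁺` of the budget `(L² - μ²) * ‖x‖²`. Since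
`0 ≤ -∂Ψ/∂s ≤ 2 * s⁺`, the radial part points outwards and is bounded by a multiple of
`ε * (1 - ‖x‖ ^ 4)⁺`; so for small `ε` it fits in what is left.
-/

open Filter Topology InnerProductSpace

section OracleProfile

/-- The energy with derivative `(y + s⁺)⁺ + (y - s⁺)⁺` in `y`. For `s ≤ 0` it is `y⁺ ^ 2`; as `s`
grows from `0`, the kink of the derivative at `0` splits into two kinks at `±s`. -/
def splitEnergy (y s : ℝ) : ℝ := ((y + s⁺)⁺ ^ 2 + (y - s⁺)⁺ ^ 2) / 2

/-- The function `Ψ` from which the perturbation of `μ / 2 * ‖x‖ ^ 2` is built. It vanishes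
identically at `s = 1`, and for `s ≤ 1` it is increasing in `y` with slope at most `1 - s⁺`. -/
def oracleProfile (y s : ℝ) : ℝ := splitEnergy y 1 - splitEnergy y s

/-- The partial derivative of `oracleProfile` in `y`. For `0 ≤ s ≤ 1` it is a trapezoid supported on
`[-1, 1]`, of height `1 - s` on the plateau `[-s, s]`. -/
def angularSlope (y s : ℝ) : ℝ :=
  (y + 1)⁺ + (y - 1)⁺ - ((y + s⁺)⁺ + (y - s⁺)⁺)

/-- The partial derivative of `splitEnergy` in `s`, which is minus that of `oracleProfile`. -/
def radialSlope (y s : ℝ) : ℝ := (y + s⁺)⁺ - (y - s⁺)⁺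

theorem hasFDerivAt_of_abs_sub_sub_le_sq {F : Type*} [NormedAddCommGroup F] [NormedSpace ℝ F]
    {f : F → ℝ} {f' : F →L[ℝ] ℝ} {x : F} (C : ℝ)
    (h : ∀ y, |f y - f x - f' (y - x)| ≤ C * ‖y - x‖ ^ 2) : HasFDerivAt f f' x := by
  have hO : (fun y => f y - f x - f' (y - x)) =O[𝓝 x] fun y => ‖y - x‖ ^ 2 :=
    .of_bound C <| .of_forall fun y => by simpa using h y
  exact hasFDerivAt_iff_isLittleO.2
    (hO.trans_isLittleO (Asymptotics.isLittleO_pow_sub_sub x one_lt_two))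

theorem abs_posPart_sq_sub_sub_le (a b : ℝ) :
    |b⁺ ^ 2 - a⁺ ^ 2 - 2 * a⁺ * (b - a)| ≤ (b - a) ^ 2 := by
  rw [abs_le]
  rcases le_total a 0 with ha | ha <;> rcases le_total b 0 with hb | hb <;>
    simp only [posPart_of_nonneg, posPart_of_nonpos, ha, hb] <;> constructor <;> nlinarith

theorem radialSlope_nonneg (y s : ℝ) : 0 ≤ radialSlope y s := by
  grind [radialSlope, posPart_def]

theorem radialSlope_le (y s : ℝ) : radialSlope y s ≤ 2 * s⁺ := by
  grind [radialSlope, posPart_def]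

theorem angularSlope_nonneg {y s : ℝ} (hs : s ≤ 1) : 0 ≤ angularSlope y s := by
  grind [angularSlope, posPart_def]

theorem angularSlope_le {y s : ℝ} (hs : s ≤ 1) : angularSlope y s ≤ 1 - s⁺ := by
  grind [angularSlope, posPart_def]

-- The kink of `s⁺` at `0` costs nothing, because `radialSlope y s` vanishes for `s ≤ 0`.
theorem abs_radialSlope_mul_posPart_sub_sub_le (y s s' : ℝ) :
    |radialSlope y s * (s'⁺ - s⁺ - (s' - s))| ≤ 2 * (s' - s) ^ 2 := by
  rcases le_or_gt s 0 with hs | hs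
  · have : radialSlope y s = 0 := by simp [radialSlope, posPart_of_nonpos hs]
    simp only [this, zero_mul, abs_zero]
    positivity
  · have hslope := radialSlope_le y s
    have hgap : |s'⁺ - s⁺ - (s' - s)| ≤ |s' - s| := by grind [posPart_def]
    rw [abs_mul, abs_of_nonneg (radialSlope_nonneg y s)]
    rcases le_total s' 0 with hs' | hs'
    · have : s ≤ |s' - s| := by grind
      rw [posPart_of_nonneg hs.le] at hslope
      calc _ ≤ (2 * |s' - s|) * |s' - s| := by
            rw [posPart_of_nonneg hs.le] at *; gcongr; linarith
        _ = _ := by rw [← sq_abs (s' - s)]; ring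
    · rw [posPart_of_nonneg hs.le, posPart_of_nonneg hs', sub_self, abs_zero, mul_zero]
      positivity

theorem hasFDerivAt_splitEnergy (y s : ℝ) :
    HasFDerivAt (fun q : ℝ × ℝ => splitEnergy q.1 q.2)
      (((y + s⁺)⁺ + (y - s⁺)⁺) • ContinuousLinearMap.fst ℝ ℝ ℝ +
        radialSlope y s • ContinuousLinearMap.snd ℝ ℝ ℝ) (y, s) := by
  refine hasFDerivAt_of_abs_sub_sub_le_sq 4 fun ⟨y', s'⟩ => ?_
  have hplus := abs_posPart_sq_sub_sub_le (y + s⁺) (y' + s'⁺)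
  have hminus := abs_posPart_sq_sub_sub_le (y - s⁺) (y' - s'⁺)
  have hkink := abs_radialSlope_mul_posPart_sub_sub_le y s s'
  have hlip : (s'⁺ - s⁺) ^ 2 ≤ (s' - s) ^ 2 := sq_le_sq.2 (by grind [posPart_def])
  have hy : (y' - y) ^ 2 ≤ ‖(y', s') - (y, s)‖ ^ 2 :=
    sq_le_sq.2 ((norm_fst_le ((y', s') - (y, s))).trans (le_abs_self _))
  have hs : (s' - s) ^ 2 ≤ ‖(y', s') - (y, s)‖ ^ 2 :=
    sq_le_sq.2 ((norm_snd_le ((y', s') - (y, s))).trans (le_abs_self _))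
  generalize ‖(y', s') - (y, s)‖ = r at *
  simp only [splitEnergy, radialSlope, add_apply, smul_apply, ContinuousLinearMap.coe_fst',
    ContinuousLinearMap.coe_snd', Prod.fst_sub, Prod.snd_sub, smul_eq_mul] at hkink ⊢
  rw [abs_le] at *
  constructor <;> linarith

theorem hasFDerivAt_oracleProfile (y s : ℝ) :
    HasFDerivAt (fun q : ℝ × ℝ => oracleProfile q.1 q.2)
      (angularSlope y s • ContinuousLinearMap.fst ℝ ℝ ℝ +
        (-radialSlope y s) • ContinuousLinearMap.snd ℝ ℝ ℝ) (y, s) := by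
  have hone : HasFDerivAt (fun q : ℝ × ℝ => splitEnergy q.1 1)
      (((y + 1)⁺ + (y - 1)⁺) • ContinuousLinearMap.fst ℝ ℝ ℝ) (y, s) := by
    refine ((hasFDerivAt_splitEnergy y 1).comp (y, s)
      (hasFDerivAt_fst.prodMk (hasFDerivAt_const (𝕜 := ℝ) (1 : ℝ) (y, s)))).congr_fderiv ?_
    ext <;> simp
  refine (hone.sub (hasFDerivAt_splitEnergy y s)).congr_fderiv ?_
  ext <;> simp [angularSlope]

theorem abs_oracleProfile_le (y : ℝ) {s : ℝ} (hs : s ≤ 1) :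
    |oracleProfile y s| ≤ 2 * (1 - s) := by
  have hderiv (t : ℝ) : HasDerivAt (oracleProfile y) (-radialSlope y t) t := by
    simpa [Function.comp_def] using (hasFDerivAt_oracleProfile y t).comp_hasDerivAt t
      ((hasDerivAt_const t y).prodMk (hasDerivAt_id t))
  have hbound : ∀ t ∈ Set.Iic (1 : ℝ), ‖-radialSlope y t‖ ≤ 2 := fun t ht => by
    rw [norm_neg, Real.norm_of_nonneg (radialSlope_nonneg y t)]
    grind [radialSlope_le, posPart_def]
  have hone : oracleProfile y 1 = 0 := sub_self _
  have hmvt := (convex_Iic 1).norm_image_sub_le_of_norm_hasDerivWithin_le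
    (fun t _ => (hderiv t).hasDerivWithinAt) hbound (Set.mem_Iic.2 le_rfl) (Set.mem_Iic.2 hs)
  rwa [hone, sub_zero, Real.norm_eq_abs, norm_sub_rev, Real.norm_of_nonneg (sub_nonneg.2 hs)]
    at hmvt

end OracleProfile

section OraclePotential

variable {E : Type*} [NormedAddCommGroup E] [InnerProductSpace ℝ E]

/-- The gradient of the angular coordinate `x ↦ ⟪w, x⟫ / ‖x‖` at `x ≠ 0`: the component of `w`
orthogonal to `x`, divided by `‖x‖`. -/
def angularGrad (w x : E) : E := ‖x‖⁻¹ • (ℝ ∙ x)ᗮ.starProjection w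

theorem angularGrad_eq (w x : E) :
    angularGrad w x = ‖x‖⁻¹ • w - (⟪w, x⟫ / ‖x‖ ^ 3) • x := by
  rw [angularGrad, Submodule.starProjection_orthogonal_val, Submodule.starProjection_singleton,
    smul_sub, smul_smul, real_inner_comm]
  simp only [RCLike.ofReal_real_eq_id, id]
  congr 2
  field_simp

theorem inner_angularGrad_self (w x : E) : ⟪angularGrad w x, x⟫ = 0 := by
  rw [angularGrad, inner_smul_left, Submodule.inner_left_of_mem_orthogonal
    (Submodule.mem_span_singleton_self x) (Submodule.starProjection_apply_mem _ _), mul_zero]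

theorem norm_angularGrad_le (w x : E) : ‖angularGrad w x‖ ≤ ‖w‖ / ‖x‖ := by
  rw [angularGrad, norm_smul, norm_inv, norm_norm, inv_mul_eq_div]
  gcongr
  exact Submodule.norm_starProjection_apply_le _ w

/-- The perturbation `ψ` of `μ / 2 * ‖x‖ ^ 2`; the small parameter `ε` damps its radial derivative
without changing its angular derivative. At `x = 0` the junk value of `⟪w, x⟫ / ‖x‖` is harmless,
since `oracleProfile y 1 = 0` for every `y`. -/
def oraclePotential (ε : ℝ) (w x : E) : ℝ :=
  ε * oracleProfile (⟪w, x⟫ / ‖x‖ / ε) (1 - ‖x‖ ^ 4)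

/-- The gradient of `oraclePotential ε w`, as the sum of its angular and radial parts. -/
def oraclePotentialGrad (ε : ℝ) (w x : E) : E :=
  angularSlope (⟪w, x⟫ / ‖x‖ / ε) (1 - ‖x‖ ^ 4) • angularGrad w x +
    (4 * ε * ‖x‖ ^ 2 * radialSlope (⟪w, x⟫ / ‖x‖ / ε) (1 - ‖x‖ ^ 4)) • x

theorem oraclePotentialGrad_zero (ε : ℝ) (w : E) : oraclePotentialGrad ε w 0 = 0 := by
  simp [oraclePotentialGrad, angularGrad]

theorem oraclePotentialGrad_of_norm_eq_one (ε : ℝ) {w x : E} (hx : ‖x‖ = 1) (hwx : ⟪w, x⟫ = 0) :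
    oraclePotentialGrad ε w x = w := by
  simp [oraclePotentialGrad, angularGrad_eq, hx, hwx, angularSlope, radialSlope]

theorem inner_oraclePotentialGrad_self (ε : ℝ) (w x : E) :
    ⟪oraclePotentialGrad ε w x, x⟫ =
      4 * ε * ‖x‖ ^ 4 * radialSlope (⟪w, x⟫ / ‖x‖ / ε) (1 - ‖x‖ ^ 4) := by
  rw [oraclePotentialGrad, inner_add_left, real_inner_smul_left, real_inner_smul_left,
    inner_angularGrad_self, real_inner_self_eq_norm_sq]
  ring

theorem norm_sq_oraclePotentialGrad (ε : ℝ) (w x : E) :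
    ‖oraclePotentialGrad ε w x‖ ^ 2 =
      (angularSlope (⟪w, x⟫ / ‖x‖ / ε) (1 - ‖x‖ ^ 4) * ‖angularGrad w x‖) ^ 2 +
        16 * ε ^ 2 * ‖x‖ ^ 6 * radialSlope (⟪w, x⟫ / ‖x‖ / ε) (1 - ‖x‖ ^ 4) ^ 2 := by
  rw [oraclePotentialGrad, norm_add_sq_real, real_inner_smul_left, real_inner_smul_right,
    inner_angularGrad_self, norm_smul, norm_smul, mul_pow, mul_pow, mul_pow, Real.norm_eq_abs,
    Real.norm_eq_abs, sq_abs, sq_abs]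
  ring

theorem inner_oraclePotentialGrad_self_nonneg {ε : ℝ} (hε : 0 ≤ ε) (w x : E) :
    0 ≤ ⟪oraclePotentialGrad ε w x, x⟫ := by
  rw [inner_oraclePotentialGrad_self]
  have := radialSlope_nonneg (⟪w, x⟫ / ‖x‖ / ε) (1 - ‖x‖ ^ 4)
  positivity

theorem sq_angularSlope_mul_norm_angularGrad_le {w x : E} {K : ℝ} (hw : ‖w‖ ^ 2 ≤ K) (y : ℝ) :
    (angularSlope y (1 - ‖x‖ ^ 4) * ‖angularGrad w x‖) ^ 2 ≤
      K * ‖x‖ ^ 2 * (1 - (1 - ‖x‖ ^ 4)⁺) := by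
  have hs : 1 - ‖x‖ ^ 4 ≤ 1 := sub_le_self 1 (by positivity)
  have hslope_nonneg := angularSlope_nonneg (y := y) hs
  have hslope := angularSlope_le (y := y) hs
  have hslope_sq : angularSlope y (1 - ‖x‖ ^ 4) ^ 2 ≤ ‖x‖ ^ 4 * (1 - (1 - ‖x‖ ^ 4)⁺) := by
    have hle : angularSlope y (1 - ‖x‖ ^ 4) ≤ ‖x‖ ^ 4 := by grind [posPart_def]
    rw [sq]
    gcongr
  have hgrad : ‖x‖ ^ 4 * ‖angularGrad w x‖ ^ 2 ≤ ‖x‖ ^ 2 * K := by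
    rcases eq_or_ne x 0 with rfl | hx
    · simp
    · calc ‖x‖ ^ 4 * ‖angularGrad w x‖ ^ 2 ≤ ‖x‖ ^ 4 * (‖w‖ / ‖x‖) ^ 2 := by
            gcongr; exact norm_angularGrad_le w x
        _ = ‖x‖ ^ 2 * ‖w‖ ^ 2 := by field_simp [norm_ne_zero_iff.2 hx]
        _ ≤ ‖x‖ ^ 2 * K := by gcongr
  calc _ = angularSlope y (1 - ‖x‖ ^ 4) ^ 2 * ‖angularGrad w x‖ ^ 2 := mul_pow ..
    _ ≤ ‖x‖ ^ 4 * (1 - (1 - ‖x‖ ^ 4)⁺) * ‖angularGrad w x‖ ^ 2 := by gcongr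
    _ = (‖x‖ ^ 4 * ‖angularGrad w x‖ ^ 2) * (1 - (1 - ‖x‖ ^ 4)⁺) := by ring
    _ ≤ (‖x‖ ^ 2 * K) * (1 - (1 - ‖x‖ ^ 4)⁺) := by
      gcongr; exact hslope_nonneg.trans hslope
    _ = _ := by ring

theorem radialSlope_excess_le {ε μ K : ℝ} (hε : 0 ≤ ε) (hμ : 0 ≤ μ)
    (hK : 64 * ε ^ 2 + 16 * μ * ε ≤ K) (y : ℝ) {r : ℝ} (hr : 0 ≤ r) :
    16 * ε ^ 2 * r ^ 6 * radialSlope y (1 - r ^ 4) ^ 2 +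
        2 * μ * (4 * ε * r ^ 4 * radialSlope y (1 - r ^ 4)) ≤ K * r ^ 2 * (1 - r ^ 4)⁺ := by
  have hslope_nonneg := radialSlope_nonneg y (1 - r ^ 4)
  have hslope := radialSlope_le y (1 - r ^ 4)
  rcases le_total 1 r with h1 | h1
  · have hσ : (1 - r ^ 4)⁺ = 0 := posPart_of_nonpos (sub_nonpos.2 (one_le_pow₀ h1))
    have hzero : radialSlope y (1 - r ^ 4) = 0 := by linarith
    simp [hσ, hzero]
  · have hσ : (1 - r ^ 4)⁺ ≤ 1 := by grind [posPart_def, pow_nonneg hr 4]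
    have hσ_nonneg := posPart_nonneg (1 - r ^ 4)
    generalize (1 - r ^ 4)⁺ = σ at *
    generalize radialSlope y (1 - r ^ 4) = b at *
    calc 16 * ε ^ 2 * r ^ 6 * b ^ 2 + 2 * μ * (4 * ε * r ^ 4 * b)
        ≤ 16 * ε ^ 2 * r ^ 6 * (2 * σ) ^ 2 + 2 * μ * (4 * ε * r ^ 4 * (2 * σ)) := by gcongr
      _ = (64 * ε ^ 2 * (r ^ 4 * σ) + 16 * μ * ε * r ^ 2) * r ^ 2 * σ := by ring
      _ ≤ (64 * ε ^ 2 * 1 + 16 * μ * ε * 1) * r ^ 2 * σ := by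
          gcongr
          · exact mul_le_one₀ (pow_le_one₀ hr h1) hσ_nonneg hσ
          · exact pow_le_one₀ hr h1
      _ ≤ K * r ^ 2 * σ := by
          gcongr
          rwa [mul_one, mul_one]

theorem norm_sq_oraclePotentialGrad_add_le {ε μ K : ℝ} (hε : 0 ≤ ε) (hμ : 0 ≤ μ)
    (hK : 64 * ε ^ 2 + 16 * μ * ε ≤ K) {w : E} (hw : ‖w‖ ^ 2 ≤ K) (x : E) :
    ‖oraclePotentialGrad ε w x‖ ^ 2 + 2 * μ * ⟪oraclePotentialGrad ε w x, x⟫ ≤ K * ‖x‖ ^ 2 := by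
  rw [norm_sq_oraclePotentialGrad, inner_oraclePotentialGrad_self]
  linarith [sq_angularSlope_mul_norm_angularGrad_le (x := x) hw (⟪w, x⟫ / ‖x‖ / ε),
    radialSlope_excess_le hε hμ hK (⟪w, x⟫ / ‖x‖ / ε) (norm_nonneg x)]

variable [CompleteSpace E]

theorem hasGradientAt_inner_div_norm (w : E) {x : E} (hx : x ≠ 0) :
    HasGradientAt (fun x => ⟪w, x⟫ / ‖x‖) (angularGrad w x) x := by
  have hnorm : ‖x‖ ≠ 0 := norm_ne_zero_iff.2 hx
  have hderiv_norm : HasFDerivAt (fun x : E => ‖x‖) (‖x‖⁻¹ • innerSL ℝ x) x := by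
    have h := (hasStrictFDerivAt_norm_sq x).hasFDerivAt.sqrt (pow_ne_zero 2 hnorm)
    simp only [Real.sqrt_sq (norm_nonneg _)] at h
    refine h.congr_fderiv ?_
    ext y
    simp only [one_div, mul_inv_rev, smul_apply, coe_innerSL_apply, nsmul_eq_mul, Nat.cast_ofNat,
      smul_eq_mul]
    field_simp
  have hderiv_inv := (hasDerivAt_inv hnorm).comp_hasFDerivAt x hderiv_norm
  rw [hasGradientAt_iff_hasFDerivAt]
  refine ((innerSL ℝ w).hasFDerivAt.mul hderiv_inv).congr_fderiv ?_
  ext y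
  simp only [coe_innerSL_apply, neg_smul, smul_neg, Function.comp_apply, add_apply, neg_apply,
    smul_apply, smul_eq_mul, angularGrad_eq, map_sub, map_smul, sub_apply, toDual_apply_apply]
  field_simp
  ring

theorem hasGradientAt_norm_pow_four (x : E) :
    HasGradientAt (fun x => ‖x‖ ^ 4) ((4 * ‖x‖ ^ 2) • x) x := by
  have h := (hasStrictFDerivAt_norm_sq x).hasFDerivAt.pow 2
  simp only [← pow_mul] at h
  rw [hasGradientAt_iff_hasFDerivAt]
  refine h.congr_fderiv ?_
  ext y
  simp only [Nat.add_one_sub_one, mul_one, nsmul_eq_mul, Nat.cast_ofNat, smul_apply,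
    coe_innerSL_apply, smul_eq_mul, map_smul, toDual_apply_apply]
  ring

theorem hasGradientAt_oraclePotential_zero (ε : ℝ) (w : E) :
    HasGradientAt (oraclePotential ε w) 0 0 := by
  have hO : oraclePotential ε w =O[𝓝 0] fun x => ‖x - 0‖ ^ 4 := by
    refine .of_bound (|ε| * 2) (.of_forall fun x => ?_)
    have hprofile := abs_oracleProfile_le (⟪w, x⟫ / ‖x‖ / ε)
      (sub_le_self 1 (pow_nonneg (norm_nonneg x) 4))
    rw [sub_sub_cancel] at hprofile
    rw [oraclePotential, norm_mul, sub_zero, norm_pow, norm_norm, mul_assoc]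
    exact mul_le_mul_of_nonneg_left hprofile (abs_nonneg ε)
  rw [hasGradientAt_iff_hasFDerivAt, map_zero]
  exact hO.hasFDerivAt (by norm_num)

theorem hasGradientAt_oraclePotential {ε : ℝ} (hε : ε ≠ 0) (w x : E) :
    HasGradientAt (oraclePotential ε w) (oraclePotentialGrad ε w x) x := by
  rcases eq_or_ne x 0 with rfl | hx
  · rw [oraclePotentialGrad_zero]
    exact hasGradientAt_oraclePotential_zero ε w
  · have hangle := (hasGradientAt_inner_div_norm w hx).hasFDerivAt.mul_const ε⁻¹
    have hradius := (hasGradientAt_norm_pow_four x).hasFDerivAt.const_sub 1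
    have hprofile := (hasFDerivAt_oracleProfile (⟪w, x⟫ / ‖x‖ / ε) (1 - ‖x‖ ^ 4)).comp x
      (hangle.prodMk hradius)
    rw [hasGradientAt_iff_hasFDerivAt]
    refine (hprofile.const_mul ε).congr_fderiv ?_
    ext y
    simp only [map_smul, ContinuousLinearMap.add_comp, ContinuousLinearMap.smul_comp,
      ContinuousLinearMap.fst_comp_prod, ContinuousLinearMap.snd_comp_prod, smul_neg, neg_smul,
      neg_neg, smul_add, add_apply, smul_apply, toDual_apply_apply, smul_eq_mul,
      oraclePotentialGrad, map_add]
    field_simp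

end OraclePotential

section IsRSIEBAround

variable {E : Type*} [NormedAddCommGroup E] [InnerProductSpace ℝ E] [CompleteSpace E]
  {μ L : ℝ} {f : E → ℝ} {z : E}

/-- The conditions `RSI⁻(μ)` and `EB⁺(L)` with `z` in the role of the projection of every point onto
the minimizers; for `0 < μ` they force `z` to be the only minimizer. -/
structure IsRSIEBAround (μ L : ℝ) (f : E → ℝ) (z : E) : Prop where
  differentiable : Differentiable ℝ f
  le_inner : ∀ x, μ * ‖x - z‖ ^ 2 ≤ ⟪gradient f x, x - z⟫
  norm_le : ∀ x, ‖gradient f x‖ ≤ L * ‖x - z‖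

theorem hasGradientAt_half_mul_norm_sq_add {ψ : E → ℝ} {g x : E} (μ : ℝ)
    (hψ : HasGradientAt ψ g x) :
    HasGradientAt (fun x => μ / 2 * ‖x‖ ^ 2 + ψ x) (μ • x + g) x := by
  rw [hasGradientAt_iff_hasFDerivAt]
  refine (((hasStrictFDerivAt_norm_sq x).hasFDerivAt.const_mul (μ / 2)).add
    hψ.hasFDerivAt).congr_fderiv ?_
  ext y
  simp only [add_apply, smul_apply, coe_innerSL_apply, nsmul_eq_mul, Nat.cast_ofNat, smul_eq_mul,
    toDual_apply_apply, map_add, map_smul, add_left_inj]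
  ring

theorem isRSIEBAround_half_mul_norm_sq_add {ψ : E → ℝ} (hL : 0 ≤ L)
    (hψ : Differentiable ℝ ψ) (hnonneg : ∀ x, 0 ≤ ⟪gradient ψ x, x⟫)
    (hexcess : ∀ x, ‖gradient ψ x‖ ^ 2 + 2 * μ * ⟪gradient ψ x, x⟫ ≤ (L ^ 2 - μ ^ 2) * ‖x‖ ^ 2) :
    IsRSIEBAround μ L (fun x => μ / 2 * ‖x‖ ^ 2 + ψ x) 0 := by
  have hgrad (x : E) := hasGradientAt_half_mul_norm_sq_add μ (hψ x).hasGradientAt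
  refine ⟨fun x => (hgrad x).differentiableAt, fun x => ?_, fun x => ?_⟩
  · rw [(hgrad x).gradient, sub_zero, inner_add_left, real_inner_smul_left,
      real_inner_self_eq_norm_sq]
    exact le_add_of_nonneg_right (hnonneg x)
  · rw [(hgrad x).gradient, sub_zero]
    refine le_of_sq_le_sq ?_ (by positivity)
    rw [norm_add_sq_real, real_inner_smul_left, real_inner_comm, norm_smul, mul_pow, mul_pow,
      Real.norm_eq_abs, sq_abs]
    linarith [hexcess x]

theorem exists_isRSIEBAround_zero (hμ : 0 ≤ μ) (hL : μ < L) {v w : E} (hv : ‖v‖ = 1)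
    (hwv : ⟪w, v⟫ = 0) (hw : ‖w‖ ^ 2 ≤ L ^ 2 - μ ^ 2) :
    ∃ f : E → ℝ, IsRSIEBAround μ L f 0 ∧ gradient f v = μ • v + w := by
  obtain ⟨ε, hε, hεK⟩ : ∃ ε : ℝ, 0 < ε ∧ 64 * ε ^ 2 + 16 * μ * ε ≤ L ^ 2 - μ ^ 2 := by
    have hK : 0 < L ^ 2 - μ ^ 2 := sub_pos.2 (by gcongr)
    refine ⟨min 1 ((L ^ 2 - μ ^ 2) / (64 + 16 * μ)), by positivity, ?_⟩
    set ε := min 1 ((L ^ 2 - μ ^ 2) / (64 + 16 * μ))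
    have hε_sq : ε ^ 2 ≤ ε := pow_le_of_le_one (by positivity) (min_le_left ..) two_ne_zero
    have hε_mul : ε * (64 + 16 * μ) ≤ L ^ 2 - μ ^ 2 :=
      (le_div_iff₀ (by positivity)).1 (min_le_right ..)
    linarith
  have hψ (x : E) := hasGradientAt_oraclePotential hε.ne' w x
  refine ⟨_, isRSIEBAround_half_mul_norm_sq_add (ψ := oraclePotential ε w) (hμ.trans hL.le)
    (fun x => (hψ x).differentiableAt) (fun x => ?_) (fun x => ?_), ?_⟩
  · rw [(hψ x).gradient]
    exact inner_oraclePotentialGrad_self_nonneg hε.le w x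
  · rw [(hψ x).gradient]
    exact norm_sq_oraclePotentialGrad_add_le hε.le hμ hεK hw x
  · rw [(hasGradientAt_half_mul_norm_sq_add μ (hψ v)).gradient,
      oraclePotentialGrad_of_norm_eq_one ε hv hwv]

theorem hasGradientAt_rescale {ρ : ℝ} (hρ : ρ ≠ 0) (c : ℝ) {g x : E}
    (hf : HasGradientAt f g (ρ⁻¹ • (x - z))) :
    HasGradientAt (fun x => ρ ^ 2 * f (ρ⁻¹ • (x - z)) + c) (ρ • g) x := by
  have hscale : HasFDerivAt (fun x : E => ρ⁻¹ • (x - z)) (ρ⁻¹ • ContinuousLinearMap.id ℝ E) x :=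
    ((hasFDerivAt_id x).sub_const z).const_smul ρ⁻¹
  rw [hasGradientAt_iff_hasFDerivAt]
  refine (((hf.hasFDerivAt.comp x hscale).const_mul (ρ ^ 2)).add_const c).congr_fderiv ?_
  ext y
  simp only [ContinuousLinearMap.comp_smulₛₗ, map_inv₀, Real.ringHom_apply,
    ContinuousLinearMap.comp_id, smul_apply, toDual_apply_apply, smul_eq_mul, map_smul]
  field_simp

namespace IsRSIEBAround

theorem rescale (hf : IsRSIEBAround μ L f 0) {ρ : ℝ} (hρ : 0 < ρ) (z : E) (c : ℝ) :
    IsRSIEBAround μ L (fun x => ρ ^ 2 * f (ρ⁻¹ • (x - z)) + c) z := by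
  have hgrad (x : E) :=
    hasGradientAt_rescale (x := x) (z := z) hρ.ne' c (hf.differentiable _).hasGradientAt
  refine ⟨fun x => (hgrad x).differentiableAt, fun x => ?_, fun x => ?_⟩
  · have h := hf.le_inner (ρ⁻¹ • (x - z))
    rw [sub_zero, norm_smul, norm_inv, Real.norm_of_nonneg hρ.le, real_inner_smul_right] at h
    rw [(hgrad x).gradient, real_inner_smul_left]
    calc μ * ‖x - z‖ ^ 2 = ρ ^ 2 * (μ * (ρ⁻¹ * ‖x - z‖) ^ 2) := by field_simp
      _ ≤ ρ ^ 2 * (ρ⁻¹ * ⟪gradient f (ρ⁻¹ • (x - z)), x - z⟫) := by gcongr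
      _ = ρ * ⟪gradient f (ρ⁻¹ • (x - z)), x - z⟫ := by field_simp
  · have h := hf.norm_le (ρ⁻¹ • (x - z))
    rw [sub_zero, norm_smul, norm_inv, Real.norm_of_nonneg hρ.le] at h
    rw [(hgrad x).gradient, norm_smul, Real.norm_of_nonneg hρ.le]
    calc _ ≤ ρ * (L * (ρ⁻¹ * ‖x - z‖)) := by gcongr
      _ = _ := by field_simp

theorem apply_lt_of_ne (hf : IsRSIEBAround μ L f z) (hμ : 0 < μ) {x : E} (hx : x ≠ z) :
    f z < f x := by
  have hderiv (t : ℝ) : HasDerivAt (fun t : ℝ => f (z + t • (x - z)))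
      ⟪gradient f (z + t • (x - z)), x - z⟫ t := by
    have hline : HasDerivAt (fun t : ℝ => z + t • (x - z)) (x - z) t := by
      simpa using ((hasDerivAt_id t).smul_const (x - z)).const_add z
    simpa [Function.comp_def] using
      (hf.differentiable _).hasGradientAt.hasFDerivAt.comp_hasDerivAt t hline
  obtain ⟨t, ht, hslope⟩ := exists_hasDerivAt_eq_slope _ _ one_pos
    (fun t _ => (hderiv t).continuousAt.continuousWithinAt) (fun t _ => hderiv t)
  have hinner := hf.le_inner (z + t • (x - z))
  rw [add_sub_cancel_left, real_inner_smul_right, hslope, norm_smul] at hinner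
  have hpos : 0 < μ * (‖t‖ * ‖x - z‖) ^ 2 := by
    have := norm_pos_iff.2 (sub_ne_zero.2 hx)
    have := norm_pos_iff.2 ht.1.ne'
    positivity
  simpa using pos_of_mul_pos_right (hpos.trans_le hinner) ht.1.le

end IsRSIEBAround

theorem exists_isRSIEBAround (hμ : 0 ≤ μ) (hL : μ < L) {x₀ g : E} (hx₀ : x₀ ≠ z)
    (hinner : ⟪g, x₀ - z⟫ = μ * ‖x₀ - z‖ ^ 2) (hnorm : ‖g‖ ≤ L * ‖x₀ - z‖) (m : ℝ) :
    ∃ f : E → ℝ, IsRSIEBAround μ L f z ∧ gradient f x₀ = g ∧ f x₀ = m := by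
  set ρ := ‖x₀ - z‖
  have hρ : 0 < ρ := norm_pos_iff.2 (sub_ne_zero.2 hx₀)
  set v := ρ⁻¹ • (x₀ - z) with hv_def
  set w := ρ⁻¹ • g - μ • v with hw_def
  have hv : ‖v‖ = 1 := norm_smul_inv_norm (𝕜 := ℝ) (sub_ne_zero.2 hx₀)
  have hgv : ⟪ρ⁻¹ • g, v⟫ = μ := by
    rw [hv_def, real_inner_smul_left, real_inner_smul_right, hinner]
    field_simp
  have hwv : ⟪w, v⟫ = 0 := by
    rw [hw_def, inner_sub_left, hgv, real_inner_smul_left, real_inner_self_eq_norm_sq, hv]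
    ring
  have hw : ‖w‖ ^ 2 ≤ L ^ 2 - μ ^ 2 := by
    have hg : ‖ρ⁻¹ • g‖ ≤ L := by
      rw [norm_smul, norm_inv, Real.norm_of_nonneg hρ.le]
      exact (inv_mul_le_iff₀' hρ).2 hnorm
    have hpyth : ‖w‖ ^ 2 = ‖ρ⁻¹ • g‖ ^ 2 - μ ^ 2 := by
      rw [hw_def, norm_sub_sq_real, real_inner_smul_right, hgv, norm_smul μ, hv, mul_one,
        Real.norm_eq_abs, sq_abs]
      ring
    rw [hpyth]
    gcongr
  obtain ⟨f, hf, hgrad⟩ := exists_isRSIEBAround_zero hμ hL hv hwv hw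
  refine ⟨_, hf.rescale hρ z (m - ρ ^ 2 * f v), ?_, add_sub_cancel _ _⟩
  rw [(hasGradientAt_rescale hρ.ne' _ (hf.differentiable _).hasGradientAt).gradient, ← hv_def,
    hgrad, hw_def, add_sub_cancel, smul_inv_smul₀ hρ.ne']

end IsRSIEBAround

namespace IsRSIEBAround

variable {d : ℕ} {μ L : ℝ} {f : EuclideanSpace ℝ (Fin d) → ℝ} {z : EuclideanSpace ℝ (Fin d)}

theorem argminSet_eq (hf : IsRSIEBAround μ L f z) (hμ : 0 < μ) :
    argminSet f = {z} := by
  refine Set.eq_singleton_iff_unique_mem.2 ⟨fun y => ?_, fun x hx => ?_⟩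
  · rcases eq_or_ne y z with rfl | hy
    exacts [le_rfl, (hf.apply_lt_of_ne hμ hy).le]
  · by_contra hne
    exact (hx z).not_gt (hf.apply_lt_of_ne hμ hne)

theorem memRSIEB (hf : IsRSIEBAround μ L f z) (hμ : 0 < μ) : MemRSIEB μ L f := by
  rw [MemRSIEB, hf.argminSet_eq hμ]
  exact ⟨hf.differentiable, Set.singleton_nonempty z, isClosed_singleton, convex_singleton z,
    fun _ => z, fun _ => ⟨rfl, fun _ hy => by rw [Set.mem_singleton_iff.1 hy]⟩, hf.le_inner,
    hf.norm_le⟩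

end IsRSIEBAround

theorem max_div_sq_one_div_two_mul_le_one_div {μ L : ℝ} (hμ : 0 < μ) (hL : μ ≤ L) :
    max (μ / L ^ 2) (1 / (2 * μ)) ≤ 1 / μ := by
  refine max_le ?_ (one_div_le_one_div_of_le hμ (by linarith))
  calc μ / L ^ 2 ≤ μ / μ ^ 2 := by gcongr
    _ = 1 / μ := by field_simp

section OrthogonalStep

variable {E : Type*} [NormedAddCommGroup E] [InnerProductSpace ℝ E] {x₀ g z : E}

theorem inner_sub_eq_of_orthogonal (α : ℝ) (horth : ⟪z - (x₀ - α • g), g⟫ = 0) :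
    ⟪g, x₀ - z⟫ = α * ‖g‖ ^ 2 := by
  have hsub : x₀ - z = α • g - (z - (x₀ - α • g)) := by abel
  rw [hsub, inner_sub_right, real_inner_smul_right, real_inner_self_eq_norm_sq,
    real_inner_comm _ g, horth, sub_zero]

theorem norm_sub_sq_eq_of_orthogonal {α r : ℝ} (hr : α ^ 2 ≤ r)
    (horth : ⟪z - (x₀ - α • g), g⟫ = 0) (hrad : ‖z - (x₀ - α • g)‖ = √(r - α ^ 2) * ‖g‖) :
    ‖x₀ - z‖ ^ 2 = r * ‖g‖ ^ 2 := by
  have hsub : x₀ - z = α • g - (z - (x₀ - α • g)) := by abel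
  rw [hsub, norm_sub_sq_real, real_inner_smul_left, real_inner_comm, horth, hrad, norm_smul,
    mul_pow, mul_pow, Real.norm_eq_abs, sq_abs, Real.sq_sqrt (sub_nonneg.2 hr)]
  ring

end OrthogonalStep

theorem stmt_13_general {d : ℕ} {μ L : ℝ} (hμ : 0 < μ) (hL : μ < L) {α₀ : ℝ}
    (hα₀ : α₀ ∈ Set.Icc (μ / L ^ 2) (1 / μ)) {x₀ g₀ : EuclideanSpace ℝ (Fin d)} (hg₀ : g₀ ≠ 0)
    {c₀ : EuclideanSpace ℝ (Fin d)} (hc₀ : c₀ = x₀ - α₀ • g₀) {xstar : EuclideanSpace ℝ (Fin d)}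
    (horth : ⟪xstar - c₀, g₀⟫ = 0)
    (hrad : ‖xstar - c₀‖ = √(α₀ / μ - α₀ ^ 2) * ‖g₀‖) (m : ℝ) :
    ‖x₀ - xstar‖ ^ 2 = α₀ / μ * ‖g₀‖ ^ 2 ∧
    ∃ f : EuclideanSpace ℝ (Fin d) → ℝ, MemRSIEB μ L f ∧
      argminSet f = {xstar} ∧ gradient f x₀ = g₀ ∧ f x₀ = m := by
  subst hc₀
  have hL_pos : 0 < L := hμ.trans hL
  have hα_pos : 0 < α₀ := lt_of_lt_of_le (by positivity) hα₀.1
  have hα_sq : α₀ ^ 2 ≤ α₀ / μ := by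
    rw [sq, ← mul_one_div]
    gcongr
    exact hα₀.2
  have hdist : ‖x₀ - xstar‖ ^ 2 = α₀ / μ * ‖g₀‖ ^ 2 :=
    norm_sub_sq_eq_of_orthogonal hα_sq horth hrad
  have hne : x₀ ≠ xstar := by
    rintro rfl
    have : 0 < α₀ / μ * ‖g₀‖ ^ 2 := by positivity
    simp [← hdist] at this
  have hinner : ⟪g₀, x₀ - xstar⟫ = μ * ‖x₀ - xstar‖ ^ 2 := by
    rw [inner_sub_eq_of_orthogonal α₀ horth, hdist]
    field_simp
  have hnorm : ‖g₀‖ ≤ L * ‖x₀ - xstar‖ := by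
    refine le_of_sq_le_sq ?_ (by positivity)
    rw [mul_pow, hdist]
    have hcoeff : 1 ≤ L ^ 2 * (α₀ / μ) := by
      rw [mul_div_assoc', one_le_div₀ hμ]
      exact (div_le_iff₀' (by positivity)).1 hα₀.1
    calc ‖g₀‖ ^ 2 ≤ L ^ 2 * (α₀ / μ) * ‖g₀‖ ^ 2 :=
          le_mul_of_one_le_left (sq_nonneg _) hcoeff
      _ = L ^ 2 * (α₀ / μ * ‖g₀‖ ^ 2) := mul_assoc ..
  obtain ⟨f, hf, hgrad, hval⟩ := exists_isRSIEBAround hμ.le hL hne hinner hnorm m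
  exact ⟨hdist, f, hf.memRSIEB hμ, hf.argminSet_eq hμ, hgrad, hval⟩

/-- Initialization of the resisting oracle: any point `x*` on the
sphere of center `c₀ = x₀ − α₀·g₀` and radius `√(α₀/μ − α₀²)·‖g₀‖` orthogonal to `g₀`
satisfies `‖x₀ − x*‖² = (α₀/μ)‖g₀‖²`, and there is a function of `RSI⁻(μ) ∩ EB⁺(L)`
minimized exactly at `x*` with gradient `g₀` and value `((μ+L)/(4μ))·α₀·‖g₀‖²` at `x₀`. -/
theorem stmt_13 {d : ℕ} (hd : 1 ≤ d) (μ L : ℝ) (hμ : 0 < μ) (hL : μ < L)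
    (α₀ : ℝ) (hα₀ : α₀ ∈ Set.Icc (μ / L ^ 2) (max (μ / L ^ 2) (1 / (2 * μ))))
    (x₀ g₀ : EuclideanSpace ℝ (Fin d)) (hg₀ : g₀ ≠ 0)
    (c₀ : EuclideanSpace ℝ (Fin d)) (hc₀ : c₀ = x₀ - α₀ • g₀)
    (xstar : EuclideanSpace ℝ (Fin d))
    (horth : ⟪xstar - c₀, g₀⟫ = 0)
    (hrad : ‖xstar - c₀‖ = Real.sqrt (α₀ / μ - α₀ ^ 2) * ‖g₀‖) :
    ‖x₀ - xstar‖ ^ 2 = α₀ / μ * ‖g₀‖ ^ 2 ∧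
    ∃ f : EuclideanSpace ℝ (Fin d) → ℝ, MemRSIEB μ L f ∧
      argminSet f = {xstar} ∧ gradient f x₀ = g₀ ∧
      f x₀ = (μ + L) / (4 * μ) * α₀ * ‖g₀‖ ^ 2 := by
  exact stmt_13_general hμ hL
    ⟨hα₀.1, hα₀.2.trans (max_div_sq_one_div_two_mul_le_one_div hμ hL.le)⟩ hg₀ hc₀ horth hrad _
end
end

section
/- Geometric step lemma for the resisting oracle: let d ≥ 1, let 0 < μ < L, r > 0, and let x, c, x* ∈ ℝ^d with x ≠ c such that ⟨x − c, c − x*⟩ = 0, ‖c − x*‖² = (1 − μ²/L²)·r², and ‖x − c‖ ≥ (μ/L)·r. Define g = (L·‖x − x*‖ / ‖x − c‖)·(x − c). Then ‖g‖ = L·‖x − x*‖ and ⟨g, x − x*⟩ ≥ μ·‖x − x*‖². -/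
open RealInnerProductSpace

/-!
Put `u = x - c` and `v = c - x*`, which are orthogonal and sum to `x - x*`. As `g` has length
`L‖u + v‖` and points along `u`, it satisfies `⟪g, u + v⟫ = L‖u + v‖‖u‖`, so the claim is that the
cosine of the angle between `g` and `x - x*` is at least `q = μ / L`, that is, `q‖u + v‖ ≤ ‖u‖`.
By Pythagoras this amounts to `q²‖v‖² ≤ (1 - q²)‖u‖²`, and both `‖v‖² ≤ (1 - q²)r²` and `qr ≤ ‖u‖`
are calibrated so that the value `q²(1 - q²)r²` separates the two sides.
-/

section Orthogonal

variable {E : Type*} [SeminormedAddCommGroup E] [InnerProductSpace ℝ E] {u v : E}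

lemma inner_div_norm_smul_add_of_inner_eq_zero (t : ℝ) (huv : ⟪u, v⟫ = 0) :
    ⟪(t / ‖u‖) • u, u + v⟫ = t * ‖u‖ := by
  rw [real_inner_smul_left, inner_add_right, huv, add_zero, real_inner_self_eq_norm_mul_norm,
    div_mul_eq_mul_div, mul_div_assoc, mul_self_div_self]

lemma mul_norm_add_le_norm_of_inner_eq_zero {q r : ℝ} (huv : ⟪u, v⟫ = 0)
    (hq₀ : 0 ≤ q) (hq₁ : q ≤ 1) (hr : 0 ≤ r)
    (hv : ‖v‖ ^ 2 ≤ (1 - q ^ 2) * r ^ 2) (hu : q * r ≤ ‖u‖) :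
    q * ‖u + v‖ ≤ ‖u‖ := by
  have hq_sq : 0 ≤ 1 - q ^ 2 := sub_nonneg.mpr (pow_le_one₀ hq₀ hq₁)
  have pythagoras : ‖u + v‖ ^ 2 = ‖u‖ ^ 2 + ‖v‖ ^ 2 := by
    simpa only [sq] using norm_add_sq_eq_norm_sq_add_norm_sq_real huv
  refine le_of_sq_le_sq ?_ (norm_nonneg u)
  calc (q * ‖u + v‖) ^ 2 = q ^ 2 * ‖u‖ ^ 2 + q ^ 2 * ‖v‖ ^ 2 := by
        rw [mul_pow, pythagoras, mul_add]
    _ ≤ q ^ 2 * ‖u‖ ^ 2 + q ^ 2 * ((1 - q ^ 2) * r ^ 2) := by gcongr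
    _ = q ^ 2 * ‖u‖ ^ 2 + (1 - q ^ 2) * (q * r) ^ 2 := by ring
    _ ≤ q ^ 2 * ‖u‖ ^ 2 + (1 - q ^ 2) * ‖u‖ ^ 2 := by gcongr
    _ = ‖u‖ ^ 2 := by ring

end Orthogonal

theorem stmt_14_general {E : Type*} [NormedAddCommGroup E] [InnerProductSpace ℝ E]
    {μ L r : ℝ} (hμ : 0 ≤ μ) (hL : 0 < L) (hμL : μ ≤ L) (hr : 0 ≤ r)
    {x c xstar : E} (hxc : x ≠ c) (horth : ⟪x - c, c - xstar⟫ = 0)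
    (hrad : ‖c - xstar‖ ^ 2 ≤ (1 - μ ^ 2 / L ^ 2) * r ^ 2)
    (hdist : μ / L * r ≤ ‖x - c‖)
    {g : E} (hg : g = (L * ‖x - xstar‖ / ‖x - c‖) • (x - c)) :
    ‖g‖ = L * ‖x - xstar‖ ∧ μ * ‖x - xstar‖ ^ 2 ≤ ⟪g, x - xstar⟫ := by
  have norm_g : ‖g‖ = L * ‖x - xstar‖ := by
    rw [hg, div_eq_mul_inv]
    exact norm_smul_inv_norm' (𝕜 := ℝ) (mul_nonneg hL.le (norm_nonneg _)) (sub_ne_zero.mpr hxc)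
  have inner_g : ⟪g, x - xstar⟫ = L * ‖x - xstar‖ * ‖x - c‖ := by
    have := inner_div_norm_smul_add_of_inner_eq_zero (L * ‖x - xstar‖) horth
    rwa [sub_add_sub_cancel, ← hg] at this
  have cosine_bound : μ / L * ‖x - xstar‖ ≤ ‖x - c‖ := by
    rw [← div_pow] at hrad
    have := mul_norm_add_le_norm_of_inner_eq_zero horth (div_nonneg hμ hL.le)
      (div_le_one_of_le₀ hμL hL.le) hr hrad hdist
    rwa [sub_add_sub_cancel] at this
  refine ⟨norm_g, ?_⟩
  calc μ * ‖x - xstar‖ ^ 2 = L * ‖x - xstar‖ * (μ / L * ‖x - xstar‖) := by field_simp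
    _ ≤ L * ‖x - xstar‖ * ‖x - c‖ := by gcongr
    _ = ⟪g, x - xstar⟫ := inner_g.symm

/-- Geometric step lemma for the resisting oracle: under the stated
orthogonality and radius conditions, the vector
`g = (L·‖x − x*‖/‖x − c‖)·(x − c)` satisfies `‖g‖ = L‖x − x*‖` and
`⟪g, x − x*⟫ ≥ μ‖x − x*‖²`. -/
theorem stmt_14 {d : ℕ} (hd : 1 ≤ d) (μ L r : ℝ) (hμ : 0 < μ) (hμL : μ < L)
    (hr : 0 < r)
    (x c xstar : EuclideanSpace ℝ (Fin d)) (hxc : x ≠ c)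
    (horth : ⟪x - c, c - xstar⟫ = 0)
    (hrad : ‖c - xstar‖ ^ 2 = (1 - μ ^ 2 / L ^ 2) * r ^ 2)
    (hdist : μ / L * r ≤ ‖x - c‖)
    (g : EuclideanSpace ℝ (Fin d))
    (hg : g = (L * ‖x - xstar‖ / ‖x - c‖) • (x - c)) :
    ‖g‖ = L * ‖x - xstar‖ ∧ μ * ‖x - xstar‖ ^ 2 ≤ ⟪g, x - xstar⟫ :=
  stmt_14_general hμ.le (hμ.trans hμL) hμL.le hr.le hxc horth hrad.le hdist hg
end
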